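/- arXiv:math/0506432 — 6 statements merged into one kernel-verified Lean document; each statement's English description precedes it below -/
import Mathlib

section
/- If a is an integer, b is a positive integer and x is a positive real number, then [a, b, x]⁺ = [a+1, (2)^{b−1}, x+1]⁻, i.e. the Euclidean continued fraction a + 1/(b + 1/x) equals the Hirzebruch–Jung continued fraction whose entries are a+1, followed by b−1 entries equal to 2, followed by x+1 (all intermediate tails of the right-hand side are positive, so it is well defined). -/
/-!
The tail of the right-hand side with `m` twos has the closed form `((m+1)x + 1)/(mx + 1)`
(`HJCF_replicate_two`), which is positive for `x > 0`. Every proper tail is of this shape, and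
taking `m = b - 1` gives `a + 1 - ((b-1)x + 1)/(bx + 1) = a + x/(bx + 1) = a + 1/(b + 1/x)`.
-/

/-- The Euclidean continued fraction `[x₁,...,xₙ]⁺ = x₁ + 1/(x₂ + 1/(⋯ + 1/xₙ))`
(value `0` for the empty list, by convention). -/
noncomputable def ECF : List ℝ → ℝ
  | [] => 0
  | [x] => x
  | x :: y :: t => x + 1 / ECF (y :: t)

/-- The Hirzebruch–Jung continued fraction `[x₁,...,xₙ]⁻ = x₁ − 1/(x₂ − 1/(⋯ − 1/xₙ))`
(value `0` for the empty list, by convention). -/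
noncomputable def HJCF : List ℝ → ℝ
  | [] => 0
  | [x] => x
  | x :: y :: t => x - 1 / HJCF (y :: t)

/-- Closed form of the tails: with `m` twos, the tail equals `((m+1)x + 1)/(mx + 1)`.
This Möbius form is preserved by `t ↦ 2 - 1/t`. -/
theorem HJCF_replicate_two (x : ℝ) (hx : 0 < x) (m : ℕ) :
    HJCF (List.replicate m (2 : ℝ) ++ [x + 1]) = ((m + 1) * x + 1) / (m * x + 1) := by
  induction m with
  | zero => simp [HJCF]
  | succ m ih =>
    have h_cons : HJCF (List.replicate (m + 1) (2 : ℝ) ++ [x + 1])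
        = 2 - 1 / HJCF (List.replicate m (2 : ℝ) ++ [x + 1]) := by
      cases m <;> rfl
    rw [h_cons, ih]
    have h₀ : (m : ℝ) * x + 1 ≠ 0 := by positivity
    have h₁ : ((m : ℝ) + 1) * x + 1 ≠ 0 := by positivity
    push_cast
    field_simp
    ring

/-- If `a ∈ ℤ`, `b ∈ ℕ` is positive and `x > 0` is real, then
`[a, b, x]⁺ = [a+1, (2)^{b−1}, x+1]⁻`, all the intermediate (proper) tails of the
right-hand side being positive, so that it is well defined. -/
theorem stmt4 (a : ℤ) (b : ℕ) (hb : 1 ≤ b) (x : ℝ) (hx : 0 < x) :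
    (∀ k, 1 ≤ k → k < (((a : ℝ) + 1) :: (List.replicate (b - 1) (2 : ℝ) ++ [x + 1])).length →
      0 < HJCF ((((a : ℝ) + 1) :: (List.replicate (b - 1) (2 : ℝ) ++ [x + 1])).drop k)) ∧
    ECF [(a : ℝ), (b : ℝ), x]
      = HJCF (((a : ℝ) + 1) :: (List.replicate (b - 1) (2 : ℝ) ++ [x + 1])) := by
  constructor
  · intro k hk hlt
    obtain ⟨j, rfl⟩ : ∃ j, k = j + 1 := ⟨k - 1, by omega⟩
    simp only [List.length_cons, List.length_append, List.length_replicate,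
      List.length_nil] at hlt
    have hj : j - (b - 1) = 0 := by omega
    rw [List.drop_succ_cons, List.drop_append, List.drop_replicate, List.length_replicate, hj,
      List.drop_zero, HJCF_replicate_two x hx]
    positivity
  · obtain ⟨m, rfl⟩ : ∃ m, b = m + 1 := ⟨b - 1, by omega⟩
    have h_cons : HJCF (((a : ℝ) + 1) :: (List.replicate (m + 1 - 1) (2 : ℝ) ++ [x + 1]))
        = (a : ℝ) + 1 - 1 / HJCF (List.replicate m (2 : ℝ) ++ [x + 1]) := by
      cases m <;> rfl
    rw [h_cons, HJCF_replicate_two x hx]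
    simp only [ECF]
    have h₀ : (m : ℝ) * x + 1 ≠ 0 := by positivity
    have h₁ : ((m : ℝ) + 1) * x + 1 ≠ 0 := by positivity
    have h₂ : (m : ℝ) + 1 + 1 / x ≠ 0 := by positivity
    push_cast
    field_simp
    ring
end

section
/- For every integer n ≥ 1 and all positive integers a₁,...,a_{2n}, one has [a₁,...,a_{2n}]⁺ = [a₁+1, (2)^{a₂−1}, a₃+2, (2)^{a₄−1}, a₅+2, ..., a_{2n−1}+2, (2)^{a_{2n}−1}]⁻: the Euclidean continued fraction of the sequence equals the Hirzebruch–Jung continued fraction whose entries are a₁+1, then a₂−1 entries 2, then a₃+2, then a₄−1 entries 2, and so on, ending with a_{2n}−1 entries 2 (both sides being well defined, with no division by zero). -/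
theorem ECF_cons (x : ℝ) (t : List ℝ) : ECF (x :: t) = x + (ECF t)⁻¹ := by
  cases t <;> simp [ECF]

theorem HJCF_cons (x : ℝ) (t : List ℝ) : HJCF (x :: t) = x - (HJCF t)⁻¹ := by
  cases t <;> simp [HJCF]

theorem ECF_nonneg (t : List ℝ) (h : ∀ x ∈ t, 0 < x) : 0 ≤ ECF t := by
  induction t with
  | nil => simp [ECF]
  | cons x t ih =>
    simp only [List.mem_cons, forall_eq_or_imp] at h
    rw [ECF_cons]
    have := inv_nonneg.2 (ih h.2)
    linarith [h.1]

theorem ECF_pos (t : List ℝ) (ht : t ≠ []) (h : ∀ x ∈ t, 0 < x) : 0 < ECF t := by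
  cases t with
  | nil => exact absurd rfl ht
  | cons x t =>
    simp only [List.mem_cons, forall_eq_or_imp] at h
    rw [ECF_cons]
    have := inv_nonneg.2 (ECF_nonneg t h.2)
    linarith [h.1]

theorem one_lt_HJCF (t : List ℝ) (ht : t ≠ []) (h : ∀ x ∈ t, 2 ≤ x) : 1 < HJCF t := by
  induction t with
  | nil => exact absurd rfl ht
  | cons x t ih =>
    simp only [List.mem_cons, forall_eq_or_imp] at h
    rw [HJCF_cons]
    rcases eq_or_ne t [] with rfl | h0
    · simp only [HJCF, inv_zero]
      linarith [h.1]
    · have := inv_lt_one_of_one_lt₀ (ih h0 h.2)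
      linarith [h.1]

/-- An entry only slightly above `1` is still allowed in front, because the inverse of the tail
is less than `1`. -/
theorem HJCF_cons_pos (x : ℝ) (hx : 1 < x) (t : List ℝ) (h : ∀ y ∈ t, 2 ≤ y) :
    0 < HJCF (x :: t) := by
  rw [HJCF_cons]
  rcases eq_or_ne t [] with rfl | h0
  · simp only [HJCF, inv_zero]
    linarith
  · have := inv_lt_one_of_one_lt₀ (one_lt_HJCF t h0 h)
    linarith

/-- Each leading entry `2` raises the denominator by one. The hypothesis also covers `t = []`
with `e = 0`, where `HJCF [] = 0` and `0⁻¹ = 0`. -/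
theorem one_sub_inv_HJCF_replicate (t : List ℝ) (e : ℝ) (he : 0 ≤ e)
    (h : 1 - (HJCF t)⁻¹ = (1 + e)⁻¹) (m : ℕ) :
    1 - (HJCF (List.replicate m 2 ++ t))⁻¹ = ((m : ℝ) + 1 + e)⁻¹ := by
  induction m with
  | zero => simpa using h
  | succ m ih =>
    rw [List.replicate_succ, List.cons_append, HJCF_cons]
    have h2 : (2 : ℝ) - (HJCF (List.replicate m 2 ++ t))⁻¹ = 1 + ((m : ℝ) + 1 + e)⁻¹ := by
      linarith
    rw [h2]
    push_cast
    have h3 : (0 : ℝ) < (m : ℝ) + 1 + e := by positivity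
    have h4 : (0 : ℝ) < (m : ℝ) + 1 + 1 + e := by positivity
    have h5 : 1 + ((m : ℝ) + 1 + e)⁻¹ = ((m : ℝ) + 1 + 1 + e) / ((m : ℝ) + 1 + e) := by
      field_simp
      ring
    rw [h5, inv_div]
    field_simp
    ring

/-- The entries following `a₁ + 1` in the Hirzebruch–Jung expansion of `a₁, ..., a_{2n}`
(`a` is indexed from `0`). -/
noncomputable def hjTail (n : ℕ) (a : ℕ → ℕ) : List ℝ :=
  (List.range n).flatMap fun j =>
    List.replicate (a (2 * j + 1) - 1) (2 : ℝ) ++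
      (if j + 1 = n then [] else [(a (2 * j + 2) : ℝ) + 2])

theorem two_le_of_mem_hjTail (n : ℕ) (a : ℕ → ℕ) : ∀ x ∈ hjTail n a, 2 ≤ x := by
  intro x hx
  simp only [hjTail, List.mem_flatMap, List.mem_append, List.mem_replicate] at hx
  obtain ⟨j, -, hx | hx⟩ := hx
  · exact hx.2.ge
  · split_ifs at hx
    · simp at hx
    · rw [List.mem_singleton] at hx
      rw [hx]
      have : (0 : ℝ) ≤ a (2 * j + 2) := Nat.cast_nonneg _
      linarith

theorem hjTail_succ (n : ℕ) (a : ℕ → ℕ) :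
    hjTail (n + 1) a = List.replicate (a 1 - 1) (2 : ℝ) ++
      (if n = 0 then [] else ((a 2 : ℝ) + 2) :: hjTail n (fun i => a (i + 2))) := by
  unfold hjTail
  rw [List.range_succ_eq_map, List.flatMap_cons, List.flatMap_map]
  rcases eq_or_ne n 0 with rfl | h
  · simp
  · simp [h, Nat.mul_add, Nat.add_right_comm]

theorem map_range_two_mul_succ (n : ℕ) (a : ℕ → ℕ) :
    ((List.range (2 * (n + 1))).map fun i => (a i : ℝ)) =
      (a 0 : ℝ) :: (a 1 : ℝ) :: (List.range (2 * n)).map fun i => (a (i + 2) : ℝ) := by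
  rw [Nat.mul_succ, List.range_succ_eq_map, List.range_succ_eq_map]
  simp [Function.comp_def]

theorem ECF_eq_hjTail (n : ℕ) (hn : n ≠ 0) (a : ℕ → ℕ) (ha : ∀ i, 0 < a i) :
    ECF ((List.range (2 * n)).map fun i => (a i : ℝ)) =
      (a 0 : ℝ) + 1 - (HJCF (hjTail n a))⁻¹ := by
  induction n generalizing a with
  | zero => exact absurd rfl hn
  | succ n ih =>
    rw [map_range_two_mul_succ, ECF_cons, ECF_cons, hjTail_succ]
    set E := ECF ((List.range (2 * n)).map fun i => (a (i + 2) : ℝ)) with hE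
    have hE0 : 0 ≤ E := by
      apply ECF_nonneg
      intro x hx
      obtain ⟨i, -, rfl⟩ := List.mem_map.1 hx
      exact_mod_cast ha _
    have key := one_sub_inv_HJCF_replicate
      (if n = 0 then [] else ((a 2 : ℝ) + 2) :: hjTail n (fun i => a (i + 2)))
      E⁻¹ (inv_nonneg.2 hE0) ?_ (a 1 - 1)
    · rw [Nat.cast_sub (ha 1)] at key
      push_cast at key
      rw [sub_add_cancel] at key
      linarith
    · rcases eq_or_ne n 0 with rfl | h
      · simp [hE, ECF, HJCF]
      · have hEpos : 0 < E := by
          apply ECF_pos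
          · simp [h]
          · intro x hx
            obtain ⟨i, -, rfl⟩ := List.mem_map.1 hx
            exact_mod_cast ha _
        have h1 := ih h (fun i => a (i + 2)) (fun i => ha _)
        have h2 : HJCF (((a 2 : ℝ) + 2) :: hjTail n (fun i => a (i + 2))) = E + 1 := by
          rw [HJCF_cons, hE, h1]
          ring
        rw [if_neg h, h2]
        field_simp
        ring

/-- For positive integers `a₁,...,a_{2n}` (here `a (i-1)` is `aᵢ`, 0-indexed),
`[a₁,...,a_{2n}]⁺ = [a₁+1, (2)^{a₂−1}, a₃+2, (2)^{a₄−1}, ..., a_{2n−1}+2, (2)^{a_{2n}−1}]⁻`,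
both sides being well defined (all tails are positive, so no division by zero occurs). -/
theorem stmt5 (n : ℕ) (hn : 1 ≤ n) (a : ℕ → ℕ) (ha : ∀ i, 0 < a i) :
    let lhs : List ℝ := (List.range (2 * n)).map fun i => (a i : ℝ)
    let rhs : List ℝ := ((a 0 : ℝ) + 1) ::
      (List.range n).flatMap fun j =>
        List.replicate (a (2 * j + 1) - 1) (2 : ℝ) ++
          (if j + 1 = n then [] else [(a (2 * j + 2) : ℝ) + 2])
    (∀ k < lhs.length, 0 < ECF (lhs.drop k)) ∧
    (∀ k < rhs.length, 0 < HJCF (rhs.drop k)) ∧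
    ECF lhs = HJCF rhs := by
  intro lhs rhs
  have hr : rhs = ((a 0 : ℝ) + 1) :: hjTail n a := rfl
  have ha0 : (0 : ℝ) < a 0 := by exact_mod_cast ha 0
  refine ⟨fun k hk => ?_, fun k hk => ?_, ?_⟩
  · apply ECF_pos
    · simpa using hk
    · intro x hx
      obtain ⟨i, -, rfl⟩ := List.mem_map.1 (List.mem_of_mem_drop hx)
      exact_mod_cast ha i
  · rw [hr] at hk ⊢
    cases k with
    | zero => exact HJCF_cons_pos _ (by linarith) _ (two_le_of_mem_hjTail n a)
    | succ k =>
      rw [List.drop_succ_cons]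
      refine zero_lt_one.trans (one_lt_HJCF _ ?_ fun x hx =>
        two_le_of_mem_hjTail n a x (List.mem_of_mem_drop hx))
      simpa using hk
  · rw [hr, HJCF_cons]
    exact ECF_eq_hjTail n (by omega) a ha
end

section
/- (Riemenschneider's staircase) Let α₁,...,α_r and β₁,...,β_t be integers ≥ 2 such that λ = [α₁,...,α_r]⁻ satisfies λ > 1 and λ/(λ−1) = [β₁,...,β_t]⁻. Define column indices c₁ = 1 and c_{j+1} = c_j + α_j − 2 for 1 ≤ j < r (so the j-th row of the point diagram occupies columns c_j, c_j+1, ..., c_j + α_j − 2). Then t = c_r + α_r − 2 and, for every k with 1 ≤ k ≤ t, β_k − 1 equals the number of indices j ∈ {1,...,r} with c_j ≤ k ≤ c_j + α_j − 2. -/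
/-- Pairs of integer sequences generated from `([2], [2])` by raising the first entry of one
sequence by `1` while prepending a `2` to the other. -/
inductive HJDual : List ℤ → List ℤ → Prop
  | base : HJDual [2] [2]
  | left (x : ℤ) (l m : List ℤ) : HJDual (x :: l) m → HJDual ((x + 1) :: l) (2 :: m)
  | right (y : ℤ) (l m : List ℤ) : HJDual l (y :: m) → HJDual (2 :: l) ((y + 1) :: m)

/-- The number of points in column `k` of the point diagram with row data `l` (a row for `x` has
`x - 1` points) whose first row starts in column `c`. -/
def colCount : ℤ → List ℤ → ℤ → ℤ
  | _, [], _ => 0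
  | c, x :: l, k => (if c ≤ k ∧ k ≤ c + x - 2 then 1 else 0) + colCount (c + x - 2) l k

lemma colCount_eq_zero (l : List ℤ) (hl : ∀ x ∈ l, 2 ≤ x) (c k : ℤ) (h : k < c) :
    colCount c l k = 0 := by
  induction l generalizing c with
  | nil => rfl
  | cons x l ih =>
    have hx := hl x (by simp)
    rw [colCount, ih (fun z hz => hl z (by simp [hz])) _ (by omega), if_neg (by omega)]
    rfl

/-- Duality is preserved by both moves, with the diagram placed at an arbitrary first column `c`. -/
lemma HJDual.staircase {l m : List ℤ} (h : HJDual l m) :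
    (∀ x ∈ l, 2 ≤ x) ∧ (m.length : ℤ) = 1 + (l.map (fun x => x - 2)).sum ∧
    ∀ (c : ℤ) (i : ℕ) (hi : i < m.length), m[i] - 1 = colCount c l (c + i) := by
  induction h with
  | base =>
    refine ⟨by simp, by simp, ?_⟩
    intro c i hi
    obtain rfl : i = 0 := by simpa using hi
    simp [colCount]
  | left x l m _ ih =>
    obtain ⟨h1, h2, h3⟩ := ih
    have hx : 2 ≤ x := h1 x (by simp)
    have hl : ∀ z ∈ l, 2 ≤ z := fun z hz => h1 z (by simp [hz])
    refine ⟨?_, ?_, ?_⟩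
    · intro z hz
      rcases List.mem_cons.1 hz with rfl | hz
      · omega
      · exact hl z hz
    · simp only [List.map_cons, List.sum_cons, List.length_cons] at h2 ⊢
      push_cast
      omega
    · intro c i hi
      cases i with
      | zero =>
        rw [colCount, colCount_eq_zero l hl _ _ (by push_cast; omega),
          if_pos (by push_cast; omega)]
        simp
      | succ i =>
        have := h3 (c + 1) i (by simpa using hi)
        rw [List.getElem_cons_succ, this, colCount, colCount]
        have e1 : c + 1 + (i : ℤ) = c + ((i + 1 : ℕ) : ℤ) := by push_cast; ring
        have e2 : c + 1 + x - 2 = c + (x + 1) - 2 := by ring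
        rw [e1, e2]
        congr 1
        have : (c + 1 ≤ c + ((i + 1 : ℕ) : ℤ)) ↔ c ≤ c + ((i + 1 : ℕ) : ℤ) := by
          push_cast; omega
        simp only [this]
  | right y l m _ ih =>
    obtain ⟨h1, h2, h3⟩ := ih
    refine ⟨?_, ?_, ?_⟩
    · intro z hz
      rcases List.mem_cons.1 hz with rfl | hz
      · rfl
      · exact h1 z hz
    · simp only [List.map_cons, List.sum_cons, List.length_cons] at h2 ⊢
      omega
    · intro c i hi
      have := h3 c i (by simpa using hi)
      have e : c + 2 - 2 = c := by ring
      rw [colCount, e, ← this]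
      cases i with
      | zero => simp
      | succ i =>
        rw [if_neg (by push_cast; omega)]
        simp

/-- `HJCF` of a list of integers. -/
noncomputable def hj (l : List ℤ) : ℝ := HJCF (l.map (fun x : ℤ => (x : ℝ)))

lemma hj_singleton (x : ℤ) : hj [x] = x := rfl

lemma hj_cons (x : ℤ) (l : List ℤ) (hl : l ≠ []) : hj (x :: l) = x - 1 / hj l := by
  cases l with
  | nil => exact absurd rfl hl
  | cons y l => rfl

lemma one_lt_hj (l : List ℤ) (hl : l ≠ []) (h : ∀ x ∈ l, 2 ≤ x) : 1 < hj l := by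
  induction l with
  | nil => exact absurd rfl hl
  | cons x l ih =>
    have hx : (2 : ℝ) ≤ x := by exact_mod_cast h x (by simp)
    by_cases hn : l = []
    · subst hn
      rw [hj_singleton]
      linarith
    · have h1 := ih hn (fun z hz => h z (by simp [hz]))
      rw [hj_cons x l hn]
      have : 1 / hj l < 1 := by
        rw [div_lt_one (by linarith)]
        exact h1
      linarith

lemma hj_add_one (x : ℤ) (l : List ℤ) : hj ((x + 1) :: l) = hj (x :: l) + 1 := by
  by_cases hn : l = []
  · subst hn
    simp [hj_singleton]
  · rw [hj_cons _ _ hn, hj_cons _ _ hn]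
    push_cast
    ring

lemma two_lt_hj (x : ℤ) (l : List ℤ) (hx : 3 ≤ x) (h : ∀ z ∈ l, 2 ≤ z) : 2 < hj (x :: l) := by
  have h1 : 1 < hj ((x - 1) :: l) := by
    apply one_lt_hj _ (by simp)
    intro z hz
    rcases List.mem_cons.1 hz with rfl | hz
    · omega
    · exact h z hz
  have := hj_add_one (x - 1) l
  rw [sub_add_cancel] at this
  linarith

lemma hj_two_lt (l : List ℤ) (hn : l ≠ []) (h : ∀ z ∈ l, 2 ≤ z) : hj (2 :: l) < 2 := by
  have h1 := one_lt_hj l hn h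
  have h2 : 0 < 1 / hj l := by positivity
  rw [hj_cons _ _ hn]
  push_cast
  linarith

/-- The reduction step: if `u + 1` and `2 - 1/v` are dual, so are `u` and `v`. -/
lemma dual_step {u v : ℝ} (hv : 1 < v) (h : (u + 1) * (2 - 1 / v) = (u + 1) + (2 - 1 / v)) :
    u * v = u + v := by
  have : v ≠ 0 := by linarith
  field_simp at h
  linarith

/-- Sequences of integers `≥ 2` whose values satisfy `λμ = λ + μ`, i.e. `μ = λ/(λ-1)`, arise from
`([2], [2])` by the two moves. -/
lemma hjDual_of_eq (l m : List ℤ) (hl0 : l ≠ []) (hm0 : m ≠ []) (hl : ∀ x ∈ l, 2 ≤ x)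
    (hm : ∀ x ∈ m, 2 ≤ x) (h : hj l * hj m = hj l + hj m) : HJDual l m := by
  match l, m with
  | [], _ => exact absurd rfl hl0
  | _ :: _, [] => exact absurd rfl hm0
  | x :: l, y :: m =>
    have hL := one_lt_hj _ hl0 hl
    have hM := one_lt_hj _ hm0 hm
    have hx := hl x (by simp)
    have hy := hm y (by simp)
    have hl' : ∀ z ∈ l, 2 ≤ z := fun z hz => hl z (by simp [hz])
    have hm' : ∀ z ∈ m, 2 ≤ z := fun z hz => hm z (by simp [hz])
    by_cases hx3 : 3 ≤ x
    · have hL2 := two_lt_hj x l hx3 hl'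
      have hM2 : hj (y :: m) < 2 := by nlinarith
      have hy2 : y = 2 := by
        by_contra hne
        have := two_lt_hj y m (by omega) hm'
        linarith
      subst hy2
      have hmn : m ≠ [] := by
        rintro rfl
        simp [hj_singleton] at hM2
      obtain ⟨x, rfl⟩ : ∃ x', x = x' + 1 := ⟨x - 1, by ring⟩
      refine HJDual.left x l m (hjDual_of_eq (x :: l) m (by simp) hmn ?_ hm' ?_)
      · intro z hz
        rcases List.mem_cons.1 hz with rfl | hz
        · omega
        · exact hl' z hz
      · rw [hj_add_one, hj_cons 2 m hmn] at h
        exact dual_step (one_lt_hj m hmn hm') (by exact_mod_cast h)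
    · obtain rfl : x = 2 := by omega
      by_cases hln : l = []
      · subst hln
        have hM2 : hj (y :: m) = 2 := by
          rw [hj_singleton] at h
          push_cast at h
          linarith
        have hy2 : y = 2 := by
          by_contra hne
          have := two_lt_hj y m (by omega) hm'
          linarith
        subst hy2
        have hmn : m = [] := by
          by_contra hmn
          have := hj_two_lt m hmn hm'
          linarith
        subst hmn
        exact HJDual.base
      · have hL2 := hj_two_lt l hln hl'
        have hM2 : 2 < hj (y :: m) := by nlinarith
        have hy3 : 3 ≤ y := by
          by_contra hne
          obtain rfl : y = 2 := by omega
          by_cases hmn : m = []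
          · subst hmn
            simp [hj_singleton] at hM2
          · have := hj_two_lt m hmn hm'
            linarith
        obtain ⟨y, rfl⟩ : ∃ y', y = y' + 1 := ⟨y - 1, by ring⟩
        refine HJDual.right y l m (hjDual_of_eq l (y :: m) hln (by simp) hl' ?_ ?_)
        · intro z hz
          rcases List.mem_cons.1 hz with rfl | hz
          · omega
          · exact hm' z hz
        · rw [hj_add_one, hj_cons 2 l hln] at h
          have := dual_step (u := hj (y :: m)) (one_lt_hj l hln hl')
            (by push_cast at h; linarith)
          linarith
termination_by l.length + m.length

lemma colCount_range (r : ℕ) (a c : ℕ → ℤ) (k : ℤ)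
    (hcs : ∀ j, j + 1 < r → c (j + 1) = c j + a j - 2) :
    colCount (c 0) ((List.range r).map a) k =
      (((Finset.range r).filter fun j => c j ≤ k ∧ k ≤ c j + a j - 2).card : ℤ) := by
  rw [Finset.card_filter]
  push_cast
  induction r generalizing a c with
  | zero => simp [colCount]
  | succ r ih =>
    rw [List.range_succ_eq_map, List.map_cons, List.map_map, colCount, Finset.sum_range_succ',
      add_comm]
    congr 1
    rw [← ih (fun j => a (j + 1)) (fun j => c (j + 1)) (fun j hj => hcs (j + 1) (by omega))]
    cases r with
    | zero => simp [colCount]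
    | succ r =>
      rw [← hcs 0 (by omega)]
      rfl

lemma sum_range_eq (r : ℕ) (a c : ℕ → ℤ)
    (hcs : ∀ j, j + 1 < r + 1 → c (j + 1) = c j + a j - 2) :
    c 0 + (((List.range (r + 1)).map a).map (fun x => x - 2)).sum = c r + a r - 2 := by
  induction r with
  | zero => simp; ring
  | succ r ih =>
    have := ih (fun j hj => hcs j (by omega))
    rw [List.range_succ, List.map_append, List.map_append, List.sum_append, ← add_assoc, this,
      ← hcs r (by omega)]
    simp
    ring

/-- Riemenschneider's staircase (point diagram).  Let `α₁,...,α_r` and `β₁,...,β_t`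
be integers `≥ 2` (0-indexed here: `a 0,...,a (r-1)` and `b 0,...,b (t-1)`) with
`λ = [α₁,...,α_r]⁻ > 1` and `λ/(λ−1) = [β₁,...,β_t]⁻`.  Define column indices
`c₁ = 1`, `c_{j+1} = c_j + α_j − 2` (0-indexed: `c 0 = 1`, `c (j+1) = c j + a j − 2`),
so that the `j`-th row of the point diagram occupies columns `c_j,...,c_j + α_j − 2`.
Then `t = c_r + α_r − 2` and for every `1 ≤ k ≤ t`, `β_k − 1` is the number of rows
`j` whose column range contains `k`. -/
theorem stmt9 (r t : ℕ) (hr : 1 ≤ r) (ht : 1 ≤ t)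
    (a b : ℕ → ℤ) (ha : ∀ j < r, 2 ≤ a j) (hb : ∀ k < t, 2 ≤ b k)
    (lam : ℝ) (hlam : lam = HJCF ((List.range r).map fun j => (a j : ℝ)))
    (hlam1 : 1 < lam)
    (hdual : lam / (lam - 1) = HJCF ((List.range t).map fun k => (b k : ℝ)))
    (c : ℕ → ℤ) (hc0 : c 0 = 1)
    (hcs : ∀ j, j + 1 < r → c (j + 1) = c j + a j - 2) :
    (t : ℤ) = c (r - 1) + a (r - 1) - 2 ∧
    ∀ k : ℕ, 1 ≤ k → k ≤ t →
      b (k - 1) - 1 =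
        (((Finset.range r).filter fun j => c j ≤ (k : ℤ) ∧ (k : ℤ) ≤ c j + a j - 2).card : ℤ) := by
  have ea : hj ((List.range r).map a) = lam := by
    rw [hlam, hj, List.map_map]
    rfl
  have eb : hj ((List.range t).map b) = lam / (lam - 1) := by
    rw [hdual, hj, List.map_map]
    rfl
  have hD : HJDual ((List.range r).map a) ((List.range t).map b) := by
    apply hjDual_of_eq
    · simp; omega
    · simp; omega
    · simpa using ha
    · simpa using hb
    · rw [ea, eb]
      have : lam - 1 ≠ 0 := by linarith
      field_simp
      ring
  obtain ⟨-, h2, h3⟩ := hD.staircase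
  constructor
  · obtain ⟨r, rfl⟩ : ∃ r', r = r' + 1 := ⟨r - 1, by omega⟩
    have := sum_range_eq r a c hcs
    rw [hc0, ← h2] at this
    simpa using this
  · intro k hk hkt
    have := h3 1 (k - 1) (by simp; omega)
    rw [← hc0, colCount_range r a c _ hcs, hc0] at this
    have e : (1 : ℤ) + ((k - 1 : ℕ) : ℤ) = k := by omega
    rw [e] at this
    simpa using this
end

section
/- Let p, q be coprime integers with 0 < q < p, and let α₁,...,α_r be integers with αᵢ ≥ 2 such that p/q = [α₁,...,α_r]⁻. Let q̄ be the unique integer with 0 < q̄ < p and q·q̄ ≡ 1 (mod p). Then p/q̄ = [α_r, α_{r−1},...,α₁]⁻. -/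
/-- The matrix of the Möbius transformation `z ↦ a - 1/z`. -/
def hjStep (a : ℤ) : Matrix (Fin 2) (Fin 2) ℤ := !![a, -1; 1, 0]

/-- The ordered product of the step matrices of a list; its first column holds the numerator and
the denominator of the continued fraction. -/
def hjMat (l : List ℤ) : Matrix (Fin 2) (Fin 2) ℤ := (l.map hjStep).prod

lemma hjMat_cons (a : ℤ) (l : List ℤ) : hjMat (a :: l) = hjStep a * hjMat l := by
  simp [hjMat]

lemma hjMat_cons_num (a : ℤ) (l : List ℤ) :
    hjMat (a :: l) 0 0 = a * hjMat l 0 0 - hjMat l 1 0 := by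
  simp [hjMat_cons, hjStep, Matrix.mul_apply, Fin.sum_univ_two]
  ring

lemma hjMat_cons_den (a : ℤ) (l : List ℤ) : hjMat (a :: l) 1 0 = hjMat l 0 0 := by
  simp [hjMat_cons, hjStep, Matrix.mul_apply, Fin.sum_univ_two]

lemma hjMat_det (l : List ℤ) : (hjMat l).det = 1 := by
  induction l with
  | nil => simp [hjMat]
  | cons a l ih => rw [hjMat_cons, Matrix.det_mul, ih]; simp [hjStep, Matrix.det_fin_two]

lemma hjMat_reverse (l : List ℤ) :
    hjMat l.reverse = !![hjMat l 0 0, -hjMat l 1 0; -hjMat l 0 1, hjMat l 1 1] := by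
  induction l with
  | nil => ext i j; fin_cases i <;> fin_cases j <;> simp [hjMat]
  | cons a l ih =>
    have h : hjMat (a :: l).reverse = hjMat l.reverse * hjStep a := by
      simp [hjMat]
    rw [h, ih, hjMat_cons]
    ext i j
    fin_cases i <;> fin_cases j <;>
      simp [hjStep, Matrix.mul_apply, Fin.sum_univ_two] <;> ring

lemma hjMat_bounds (l : List ℤ) (hl : ∀ x ∈ l, 2 ≤ x) :
    0 ≤ hjMat l 1 0 ∧ hjMat l 1 0 < hjMat l 0 0 := by
  induction l with
  | nil => simp [hjMat]
  | cons a l ih =>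
    obtain ⟨h0, h1⟩ := ih fun x hx => hl x (List.mem_cons_of_mem _ hx)
    have ha : 2 ≤ a := hl a List.mem_cons_self
    rw [hjMat_cons_num, hjMat_cons_den]
    constructor
    · lia
    · nlinarith

/-- For the empty list both sides are `0`, because `1 / 0 = 0`. -/
lemma hjcf_eq (l : List ℤ) (hl : ∀ x ∈ l, 2 ≤ x) :
    HJCF (l.map fun x => (x : ℝ)) = (hjMat l 0 0 : ℝ) / (hjMat l 1 0 : ℝ) := by
  induction l with
  | nil => simp [HJCF, hjMat]
  | cons a l ih =>
    have hl' : ∀ x ∈ l, 2 ≤ x := fun x hx => hl x (List.mem_cons_of_mem _ hx)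
    -- The convention `HJCF [] = 0` lets the recursion hold for an empty tail too.
    have hrec : HJCF ((a :: l).map fun x => (x : ℝ))
        = a - 1 / HJCF (l.map fun x => (x : ℝ)) := by
      cases l <;> simp [HJCF]
    obtain ⟨h0, h1⟩ := hjMat_bounds l hl'
    have hP : (hjMat l 0 0 : ℝ) ≠ 0 := by
      have : hjMat l 0 0 ≠ 0 := by lia
      exact_mod_cast this
    rw [hrec, ih hl', hjMat_cons_num, hjMat_cons_den, one_div_div]
    push_cast
    field_simp

/-- Let `p, q` be coprime integers with `0 < q < p` and let `p/q = [α₁,...,α_r]⁻`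
with all `αᵢ ≥ 2`.  If `q̄` is the unique integer with `0 < q̄ < p` and
`q·q̄ ≡ 1 (mod p)`, then `p/q̄ = [α_r, α_{r−1}, ..., α₁]⁻`. -/
theorem stmt12 (p q qbar : ℤ) (hq : 0 < q) (hqp : q < p)
    (hcop : IsCoprime p q)
    (l : List ℤ) (hl : ∀ x ∈ l, 2 ≤ x)
    (hpq : (p : ℝ) / (q : ℝ) = HJCF (l.map fun x => (x : ℝ)))
    (hqbar : 0 < qbar) (hqbarp : qbar < p)
    (hmod : q * qbar ≡ 1 [ZMOD p]) :
    (p : ℝ) / (qbar : ℝ) = HJCF (l.reverse.map fun x => (x : ℝ)) := by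
  have hlr : ∀ x ∈ l.reverse, 2 ≤ x := fun x hx => hl x (List.mem_reverse.mp hx)
  have hb := hjMat_bounds l hl
  have hbr := hjMat_bounds l.reverse hlr
  have hdet := hjMat_det l
  rw [hjcf_eq l hl] at hpq
  rw [hjcf_eq _ hlr]
  rw [hjMat_reverse] at hbr ⊢
  rw [Matrix.det_fin_two] at hdet
  simp only [Matrix.of_apply, Matrix.cons_val', Matrix.cons_val_zero, Matrix.cons_val_one,
    Matrix.cons_val_fin_one] at hbr ⊢
  generalize hjMat l 0 0 = P at *
  generalize hjMat l 1 0 = C at *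
  generalize hjMat l 0 1 = B at *
  generalize hjMat l 1 1 = E at *
  have hp : 0 < p := by lia
  have hC : C ≠ 0 := by
    rintro rfl
    have : (0 : ℝ) < (p : ℝ) / q := by positivity
    simp [hpq] at this
  have hcross : p * C = P * q := by
    have hC' : (C : ℝ) ≠ 0 := by exact_mod_cast hC
    have hq' : (q : ℝ) ≠ 0 := by exact_mod_cast hq.ne'
    rw [div_eq_div_iff hq' hC'] at hpq
    exact_mod_cast hpq
  have hcopPC : IsCoprime P C := ⟨E, -B, by linarith⟩
  have hpP : p = P := by
    apply Int.dvd_antisymm hp.le (by lia)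
    · exact hcop.dvd_of_dvd_mul_right ⟨C, hcross.symm⟩
    · exact hcopPC.dvd_of_dvd_mul_right ⟨q, hcross⟩
  subst hpP
  have hqC : C = q := mul_left_cancel₀ hp.ne' hcross
  subst hqC
  have hdvd : p ∣ qbar + B := by
    obtain ⟨k, hk⟩ := hmod.dvd
    exact hcop.dvd_of_dvd_mul_left ⟨E - k, by linear_combination -hk - hdet⟩
  have hzero : qbar + B = 0 := by
    apply Int.eq_zero_of_abs_lt_dvd hdvd
    rw [abs_lt]
    constructor <;> lia
  have hB : -B = qbar := by lia
  rw [hB]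
end

section
/- Let r ≥ 2 and let a₁,...,a_r be integers with aᵢ ≥ 2 for all i and a_j ≥ 3 for at least one index j. Then Z⁻(a₁,...,a_r) − Z⁻(a₂,...,a_{r−1}) ≥ 3 (for r = 2 the subtracted term is Z⁻ of the empty sequence, equal to 1). Equivalently, the trace of the monodromy matrix product M(a_r)···M(a₁), with M(a) having rows (a,1) and (−1,0), is at least 3. -/
/-!
For a sequence `l` of length at least two put `A = Z⁻(l)`, and let `B`, `C`, `D` be the values of
`Z⁻` after deleting from `l` its first entry, its last entry, and both. The trace is
`A - D = (A - B - C + D) + (B - D) + (C - D)`. Prepending `x` sends `(A, B, C, D)` to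
`(x A - B, A, x C - D, C)`; hence `u = A - B - C + D` changes by `(x - 2) (A - C)`,
`C - D` changes by `(x - 2) C`, and `B - D` becomes `A - C = u + (B - D)`. When all entries are at
least `2`, induction therefore keeps `D ≥ 0`, `B - D ≥ 1`, `C - D ≥ 1`, `u ≥ 0`, and `u` is
positive as soon as some entry is at least `3` (`ZmInt_invariant`).
-/

/-- The polynomials `Z⁻` (over the integers), defined by `Z⁻(∅) = 1`, `Z⁻(x) = x` and
`Z⁻(x₁,...,xₙ) = x₁·Z⁻(x₂,...,xₙ) − Z⁻(x₃,...,xₙ)`. -/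
def ZmInt : List ℤ → ℤ
  | [] => 1
  | [x] => x
  | x :: y :: t => x * ZmInt (y :: t) - ZmInt t

/-- The four inequalities preserved by prepending an entry `≥ 2`; the last one improves to
`A - B - C + D ≥ 1` once an entry `≥ 3` occurs. The sequence has length at least two, so that `D`
is the value of `Z⁻` on an actual list. -/
theorem ZmInt_invariant (t : List ℤ) : ∀ x y : ℤ, (∀ z ∈ x :: y :: t, 2 ≤ z) →
    0 ≤ ZmInt (y :: t).dropLast ∧
    1 ≤ ZmInt (y :: t) - ZmInt (y :: t).dropLast ∧
    1 ≤ ZmInt (x :: y :: t).dropLast - ZmInt (y :: t).dropLast ∧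
    0 ≤ ZmInt (x :: y :: t) - ZmInt (y :: t) - ZmInt (x :: y :: t).dropLast
      + ZmInt (y :: t).dropLast ∧
    ((∃ z ∈ x :: y :: t, 3 ≤ z) →
      1 ≤ ZmInt (x :: y :: t) - ZmInt (y :: t) - ZmInt (x :: y :: t).dropLast
        + ZmInt (y :: t).dropLast) := by
  induction t with
  | nil =>
    intro x y h
    have hx : 2 ≤ x := h x (by simp)
    have hy : 2 ≤ y := h y (by simp)
    simp only [List.dropLast, ZmInt]
    refine ⟨by norm_num, by linarith, by linarith, by nlinarith, ?_⟩
    rintro ⟨z, hz, h3⟩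
    simp only [List.mem_cons, List.not_mem_nil, or_false] at hz
    rcases hz with rfl | rfl <;> nlinarith
  | cons z t ih =>
    intro x y h
    have hx : 2 ≤ x := h x (by simp)
    obtain ⟨hD, hB, hC, hu, hu3⟩ := ih y z fun w hw => h w (List.mem_cons_of_mem _ hw)
    have eA : ZmInt (x :: y :: z :: t) = x * ZmInt (y :: z :: t) - ZmInt (z :: t) := rfl
    have eC : ZmInt (x :: y :: z :: t).dropLast
        = x * ZmInt (y :: z :: t).dropLast - ZmInt (z :: t).dropLast := rfl
    rw [eA, eC]
    generalize ZmInt (y :: z :: t) = A at *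
    generalize ZmInt (z :: t) = B at *
    generalize ZmInt (y :: z :: t).dropLast = C at *
    generalize ZmInt (z :: t).dropLast = D at *
    have hxC : 0 ≤ (x - 2) * C := mul_nonneg (by linarith) (by linarith)
    have hxAC : 0 ≤ (x - 2) * (A - C - 1) := mul_nonneg (by linarith) (by linarith)
    refine ⟨by linarith, by linarith, by linarith, by linarith, ?_⟩
    rintro ⟨w, hw, h3⟩
    rcases List.mem_cons.1 hw with rfl | hw
    · linarith
    · have := hu3 ⟨w, hw, h3⟩
      linarith

/-- Let `r ≥ 2` and let `a₁,...,a_r` (0-indexed: `a 0,...,a (r-1)`) be integers with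
`aᵢ ≥ 2` for all `i` and `a_j ≥ 3` for at least one `j`.  Then
`Z⁻(a₁,...,a_r) − Z⁻(a₂,...,a_{r−1}) ≥ 3` (this difference is the trace of the
monodromy matrix product `M(a_r)···M(a₁)`). -/
theorem stmt14 (r : ℕ) (hr : 2 ≤ r) (a : ℕ → ℤ)
    (ha : ∀ i < r, 2 ≤ a i) (hj : ∃ j < r, 3 ≤ a j) :
    3 ≤ ZmInt ((List.range r).map a) - ZmInt ((List.range (r - 2)).map fun i => a (i + 1)) := by
  obtain ⟨n, rfl⟩ : ∃ n, r = n + 2 := ⟨r - 2, by omega⟩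
  have e : (List.range (n + 2)).map a
      = a 0 :: a 1 :: (List.range n).map fun i => a (i + 2) := by
    simp [List.range_succ_eq_map, Function.comp_def]
  have e' : (List.range n).map (fun i => a (i + 1))
      = (a 1 :: (List.range n).map fun i => a (i + 2)).dropLast := by
    have : (a 1 :: (List.range n).map fun i => a (i + 2))
        = (List.range (n + 1)).map fun i => a (i + 1) := by
      simp [List.range_succ_eq_map, Function.comp_def]
    rw [this, List.range_succ]
    simp
  have hmem : ∀ z ∈ (List.range (n + 2)).map a, 2 ≤ z := by
    intro z hz
    obtain ⟨i, hi, rfl⟩ := List.mem_map.1 hz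
    exact ha i (List.mem_range.1 hi)
  have hex : ∃ z ∈ (List.range (n + 2)).map a, 3 ≤ z := by
    obtain ⟨j, hjr, h3⟩ := hj
    exact ⟨a j, List.mem_map.2 ⟨j, List.mem_range.2 hjr, rfl⟩, h3⟩
  rw [Nat.add_sub_cancel, e']
  rw [e] at hmem hex ⊢
  obtain ⟨-, hB, hC, -, hu⟩ := ZmInt_invariant _ _ _ hmem
  linarith [hu hex]
end

section
/- Let λ > 1 be a real number and let a₁ = ⌊λ⌋ be its integer part. Let σ_x(λ) = {(x, y) ∈ ℝ² : 0 ≤ y ≤ λ·x} be the closed cone between the positive x-axis and the half-line of slope λ, and let K be the convex hull in ℝ² of the set of points of σ_x(λ) with integer coordinates, other than the origin. Then every point of K has first coordinate ≥ 1, the intersection of K with the vertical line {x = 1} is exactly the segment joining (1, 0) to (1, a₁), and this segment is an extreme subset (a face) of K; in particular it is a compact edge of the boundary polygonal line of K. -/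
/-!
All three claims reduce to enclosing `K` in one convex region cut out by three half-planes,
`C = {x ≥ 1, y ≥ 0, y ≤ ⌊λ⌋ + 2λ(x - 1)}` (`coneRegion`). A nonzero lattice point of the cone has
abscissa a positive integer; at abscissa `1` its ordinate is at most `⌊λ⌋`, and at abscissa
`x ≥ 2` one has `λx ≤ 2λ(x - 1)`, so it lies in `C`. Hence `K ⊆ C`, and `C` meets the line
`x = 1` exactly in the segment from `(1, 0)` to `(1, ⌊λ⌋)`, whose endpoints are lattice points of
the cone. This segment is the part of `K` on its supporting line `x = 1`, hence a face.
-/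

/-- The half-planes `x ≥ 1`, `y ≥ 0` and `y ≤ ⌊λ⌋ + 2λ(x - 1)`; the slope `2λ` is large enough for
the third one to contain the lattice points of the cone with `x ≥ 2`. -/
def coneRegion (lam : ℝ) : Set (ℝ × ℝ) :=
  {p | 1 ≤ p.1 ∧ 0 ≤ p.2 ∧ p.2 ≤ (⌊lam⌋ : ℝ) + 2 * lam * (p.1 - 1)}

lemma convex_coneRegion (lam : ℝ) : Convex ℝ (coneRegion lam) := by
  rintro ⟨x, y⟩ ⟨h1, h2, h3⟩ ⟨x', y'⟩ ⟨h1', h2', h3'⟩ a b ha hb hab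
  obtain rfl : b = 1 - a := by linarith
  simp only [coneRegion, Set.mem_ofPred_eq, Prod.smul_mk, Prod.mk_add_mk, smul_eq_mul] at *
  refine ⟨?_, by positivity, ?_⟩
  · linarith [mul_le_mul_of_nonneg_left h1 ha, mul_le_mul_of_nonneg_left h1' hb]
  · linarith [mul_le_mul_of_nonneg_left h3 ha, mul_le_mul_of_nonneg_left h3' hb]

lemma mem_coneRegion_of_int {lam : ℝ} (hlam : 1 < lam) {m n : ℤ}
    (h0 : ((m : ℝ), (n : ℝ)) ≠ 0) (hn : 0 ≤ (n : ℝ)) (hnm : (n : ℝ) ≤ lam * m) :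
    ((m : ℝ), (n : ℝ)) ∈ coneRegion lam := by
  have hm0 : (0 : ℝ) ≤ m := nonneg_of_mul_nonneg_right (hn.trans hnm) (by linarith)
  have hm : 1 ≤ m := by
    by_contra! hlt
    have hz : m = 0 := le_antisymm (by omega) (by exact_mod_cast hm0)
    subst hz
    apply h0
    simp only [Int.cast_zero, mul_zero] at hnm
    simp [le_antisymm hnm hn]
  have hfl : (0 : ℝ) ≤ (⌊lam⌋ : ℝ) := by
    exact_mod_cast Int.floor_nonneg.2 (by linarith)
  refine ⟨Int.cast_one_le_of_pos hm, hn, ?_⟩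
  rcases hm.eq_or_lt with rfl | hm2
  · have : n ≤ ⌊lam⌋ := Int.le_floor.2 (by simpa using hnm)
    simpa using this
  · have hm2' : (2 : ℝ) ≤ m := by exact_mod_cast hm2
    have := mul_le_mul_of_nonneg_left hm2' (by linarith : 0 ≤ lam)
    simp only
    linarith

lemma mem_segment_of_mem_coneRegion {lam : ℝ} (hlam : 1 < lam) {p : ℝ × ℝ}
    (hp : p ∈ coneRegion lam) (h1 : p.1 = 1) :
    p ∈ segment ℝ ((1 : ℝ), (0 : ℝ)) ((1 : ℝ), (⌊lam⌋ : ℝ)) := by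
  have hfl : (0 : ℝ) ≤ (⌊lam⌋ : ℝ) := by
    exact_mod_cast Int.floor_nonneg.2 (by linarith)
  rw [← Prod.image_mk_segment_right, segment_eq_Icc hfl]
  obtain ⟨-, h2, h3⟩ := hp
  refine ⟨p.2, ⟨h2, by simpa [h1] using h3⟩, Prod.ext h1.symm rfl⟩


/-- Let `λ > 1` be real and `a₁ = ⌊λ⌋`.  Let `σ_x(λ) = {(x,y) : 0 ≤ y ≤ λ·x}` and let
`K` be the convex hull of the nonzero integral points of `σ_x(λ)`.  Then every point
of `K` has first coordinate `≥ 1`, the intersection of `K` with the vertical line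
`{x = 1}` is exactly the segment from `(1, 0)` to `(1, a₁)`, and this segment is an
extreme subset (a face) of `K`; in particular it is a compact edge of the boundary
polygonal line of `K`. -/
theorem stmt18 (lam : ℝ) (hlam : 1 < lam) :
    let K : Set (ℝ × ℝ) := convexHull ℝ
      {p : ℝ × ℝ | (∃ mn : ℤ × ℤ, p = ((mn.1 : ℝ), (mn.2 : ℝ))) ∧ p ≠ 0 ∧
        0 ≤ p.2 ∧ p.2 ≤ lam * p.1}
    (∀ p ∈ K, 1 ≤ p.1) ∧
    {p | p ∈ K ∧ p.1 = 1} = segment ℝ ((1 : ℝ), (0 : ℝ)) ((1 : ℝ), (⌊lam⌋ : ℝ)) ∧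
    IsExtreme ℝ K (segment ℝ ((1 : ℝ), (0 : ℝ)) ((1 : ℝ), (⌊lam⌋ : ℝ))) := by
  intro K
  have hKC : K ⊆ coneRegion lam := by
    refine convexHull_min ?_ (convex_coneRegion lam)
    rintro _ ⟨⟨⟨m, n⟩, rfl⟩, h0, hn, hnm⟩
    exact mem_coneRegion_of_int hlam h0 hn hnm
  have hfl : (0 : ℝ) ≤ (⌊lam⌋ : ℝ) := by
    exact_mod_cast Int.floor_nonneg.2 (by linarith)
  have hseg : segment ℝ ((1 : ℝ), (0 : ℝ)) ((1 : ℝ), (⌊lam⌋ : ℝ)) ⊆ K := by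
    refine (convex_convexHull ℝ _).segment_subset (subset_convexHull ℝ _ ?_)
      (subset_convexHull ℝ _ ?_)
    · exact ⟨⟨(1, 0), by simp⟩, by simp, le_rfl, by simp only; linarith⟩
    · exact ⟨⟨(1, ⌊lam⌋), by simp⟩, by simp, hfl, by simpa using Int.floor_le lam⟩
  have hfst : ∀ p ∈ segment ℝ ((1 : ℝ), (0 : ℝ)) ((1 : ℝ), (⌊lam⌋ : ℝ)), p.1 = 1 := by
    intro p hp
    rw [← Prod.image_mk_segment_right] at hp
    obtain ⟨y, -, rfl⟩ := hp
    rfl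
  refine ⟨fun p hp => (hKC hp).1, ?_, ?_⟩
  · ext p
    exact ⟨fun hp => mem_segment_of_mem_coneRegion hlam (hKC hp.1) hp.2,
      fun hp => ⟨hseg hp, hfst p hp⟩⟩
  · refine ⟨hseg, ?_⟩
    rintro p hp q hq z hz ⟨a, b, ha, hb, hab, rfl⟩
    refine mem_segment_of_mem_coneRegion hlam (hKC hp) (le_antisymm ?_ (hKC hp).1)
    -- `a * p.1 + b * q.1 = 1 = a + b` with `q.1 ≥ 1` gives `a * p.1 ≤ a`.
    have h1 : a * p.1 + b * q.1 = 1 := by simpa using hfst _ hz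
    have h2 := mul_le_mul_of_nonneg_left (hKC hq).1 hb.le
    refine le_of_mul_le_mul_left ?_ ha
    linarith
end
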